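/- arXiv:1902.07325 — 3 statements merged into one kernel-verified Lean document; each statement's English description precedes it below -/
import Mathlib

section
/- (Zaslavsky's formula) For any hyperplane arrangement 𝒜 in ℝ^n, the total number of chambers of 𝒜 equals (−1)^{rk(𝒜)} χ(𝒜, −1) = Σ_Y (−1)^{rk(𝒜) − rk(Y)} μ(Y, ⊤), the sum over all flats Y of 𝒜. -/
open Finset MeasureTheory

noncomputable section

namespace CharElts

/-- Ambient Euclidean space `ℝ^n`. -/
abbrev V (n : ℕ) := EuclideanSpace ℝ (Fin n)

/-- An affine functional on `ℝ^n`; a hyperplane is its zero set. -/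
abbrev AffForm (n : ℕ) := V n →ᵃ[ℝ] ℝ

/-- The hyperplane determined by an affine functional. -/
def hypSet {n : ℕ} (ℓ : AffForm n) : Set (V n) := {x | ℓ x = 0}

variable {n : ℕ} (𝒜 : Finset (AffForm n))

/-- Index type for the hyperplanes of the arrangement. -/
abbrev Idx := {ℓ : AffForm n // ℓ ∈ 𝒜}

/-- The (possibly empty) set cut out by a sign vector `σ`. -/
def faceSet (σ : Idx 𝒜 → SignType) : Set (V n) :=
  {x | ∀ ℓ : Idx 𝒜, SignType.sign (ℓ.1 x) = σ ℓ}

/-- A face of the arrangement: a sign vector whose face set is nonempty. -/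
@[ext] structure Face where
  sgn : Idx 𝒜 → SignType
  nonempty : (faceSet 𝒜 sgn).Nonempty

open Classical in
instance : Fintype (Face 𝒜) :=
  Fintype.ofInjective Face.sgn (fun F G h => by cases F; cases G; simpa using h)

/-- The underlying point set of a face. -/
def Face.carrier (F : Face 𝒜) : Set (V n) := faceSet 𝒜 F.sgn

/-- A flat: a nonempty intersection of some subcollection of the hyperplanes
(the empty intersection gives all of `ℝ^n`). -/
def IsFlat (X : Set (V n)) : Prop :=
  X.Nonempty ∧ ∃ P : Idx 𝒜 → Prop, X = ⋂ ℓ ∈ {ℓ : Idx 𝒜 | P ℓ}, hypSet ℓ.1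

/-- The poset of flats, ordered by inclusion. -/
def Flat := {X : Set (V n) // IsFlat 𝒜 X}

instance : PartialOrder (Flat 𝒜) :=
  inferInstanceAs (PartialOrder {X : Set (V n) // IsFlat 𝒜 X})

lemma flat_eq_inter (X : Flat 𝒜) :
    X.1 = ⋂ ℓ ∈ {ℓ : Idx 𝒜 | X.1 ⊆ hypSet ℓ.1}, hypSet ℓ.1 := by
  obtain ⟨Z, hne, P, rfl⟩ := X
  apply subset_antisymm
  · intro x hx
    simp only [Set.mem_iInter, Set.mem_setOf_eq]
    intro ℓ hℓ
    exact hℓ hx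
  · intro x hx
    simp only [Set.mem_iInter, Set.mem_setOf_eq] at hx ⊢
    intro ℓ hℓ
    refine hx ℓ ?_
    intro y hy
    simp only [Set.mem_iInter, Set.mem_setOf_eq] at hy
    exact hy ℓ hℓ

open Classical in
instance : Fintype (Flat 𝒜) :=
  Fintype.ofInjective (fun X : Flat 𝒜 => {ℓ : Idx 𝒜 | X.1 ⊆ hypSet ℓ.1}) <| by
    intro X Y h
    dsimp only at h
    apply Subtype.ext
    rw [flat_eq_inter 𝒜 X, flat_eq_inter 𝒜 Y, h]

/-- The top flat: the whole ambient space. -/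
def topFlat : Flat 𝒜 :=
  ⟨Set.univ, ⟨⟨0, trivial⟩, fun _ => False, by simp⟩⟩

/-- The support of a face: the intersection of the hyperplanes on which it lies. -/
def supp (F : Face 𝒜) : Flat 𝒜 :=
  ⟨⋂ ℓ ∈ {ℓ : Idx 𝒜 | F.sgn ℓ = 0}, hypSet ℓ.1, by
    constructor
    · obtain ⟨x, hx⟩ := F.nonempty
      refine ⟨x, ?_⟩
      simp only [Set.mem_iInter, Set.mem_setOf_eq]
      intro ℓ hℓ
      have h0 := hx ℓ
      rw [hℓ] at h0
      simpa [hypSet, sign_eq_zero_iff] using h0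
    · exact ⟨fun ℓ => F.sgn ℓ = 0, rfl⟩⟩

/-- The dimension of (the affine hull of) a subset of `ℝ^n`. -/
def dimS (X : Set (V n)) : ℕ := Module.finrank ℝ (vectorSpan ℝ X)

open Classical in
/-- An element `w = Σ_F w^F H_F` of the Tits algebra (recorded by its coefficient
vector) is *characteristic of parameter `t`* if for every flat `X`, the sum of the
coefficients of the faces with support contained in `X` equals `t ^ rk X`,
where `rk X = dim X - d` and `d` is the common dimension of the minimal flats. -/
def IsCharacteristic (d : ℕ) (w : Face 𝒜 → ℝ) (t : ℝ) : Prop :=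
  ∀ X : Flat 𝒜,
    (∑ F : Face 𝒜, if (supp 𝒜 F).1 ⊆ X.1 then w F else 0) = t ^ (dimS X.1 - d)

/-- The sign vector of the Tits product `FG` of two faces. -/
def combineSgn {I : Type*} (σ τ : I → SignType) : I → SignType :=
  fun ℓ => if σ ℓ = 0 then τ ℓ else σ ℓ

open Classical in
/-- The product of the Tits algebra, on coefficient vectors:
`(u·v)^C = Σ_{F,G : FG = C} u^F v^G`, extending `H_F · H_G = H_{FG}` bilinearly. -/
def mulT (u v : Face 𝒜 → ℝ) : Face 𝒜 → ℝ :=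
  fun C => ∑ F : Face 𝒜, ∑ G : Face 𝒜,
    if combineSgn F.sgn G.sgn = C.sgn then u F * v G else 0

open Classical in
/-- The basis element `H_F` of the Tits algebra, as a coefficient vector. -/
def unitV (F : Face 𝒜) : Face 𝒜 → ℝ := fun G => if G = F then 1 else 0

/-- A chamber: a face whose sign vector is nowhere zero. -/
def IsChamber (F : Face 𝒜) : Prop := ∀ ℓ : Idx 𝒜, F.sgn ℓ ≠ 0

open Classical in
/-- `IsMoebius 𝒜 μ` states that `μ` is the Möbius function of the poset of
flats of `𝒜` (these conditions determine `μ` uniquely). -/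
def IsMoebius (μ : Flat 𝒜 → Flat 𝒜 → ℝ) : Prop :=
  (∀ X, μ X X = 1) ∧
  (∀ X Y : Flat 𝒜, X < Y →
    (∑ Z : Flat 𝒜, if X ≤ Z ∧ Z ≤ Y then μ X Z else 0) = 0) ∧
  (∀ X Y : Flat 𝒜, ¬ X ≤ Y → μ X Y = 0)

open Classical in
/-- `χ(𝒜^X, t) = Σ_{Y ≤ X} μ(Y, X) t^{rk Y}`: the characteristic polynomial of the
arrangement under the flat `X`.  Taking `X = ⊤` gives the characteristic
polynomial of `𝒜` itself. -/
def charPolyUnder (μ : Flat 𝒜 → Flat 𝒜 → ℝ) (d : ℕ) (X : Flat 𝒜) (t : ℝ) : ℝ :=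
  ∑ Y : Flat 𝒜, if Y ≤ X then μ Y X * t ^ (dimS Y.1 - d) else 0

/-- The space of directions `L = ⋂_{H ∈ 𝒜} dir(H)`: the intersection of the kernels of
the linear parts of the defining functionals. -/
def dirL : Submodule ℝ (V n) := ⨅ ℓ : Idx 𝒜, LinearMap.ker ℓ.1.linear

/-- A face is essentially bounded if its image in `ℝ^n / L` is bounded. -/
def EssBounded (F : Face 𝒜) : Prop :=
  Bornology.IsBounded ((dirL 𝒜).mkQ '' F.carrier)

/-- A hyperplane (zero set of a nonconstant affine functional) is nonempty. -/
lemma hyp_nonempty (ℓ : AffForm n) (h : ℓ.linear ≠ 0) : (hypSet ℓ).Nonempty := by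
  obtain ⟨v, hv⟩ : ∃ v, ℓ.linear v ≠ 0 := by
    by_contra hc
    push_neg at hc
    exact h (LinearMap.ext fun v => hc v)
  refine ⟨((-ℓ 0) / (ℓ.linear v)) • v, ?_⟩
  have hdecomp : ℓ (((-ℓ 0) / (ℓ.linear v)) • v)
      = ℓ.linear (((-ℓ 0) / (ℓ.linear v)) • v) + ℓ 0 := by
    conv_lhs => rw [show ((-ℓ 0) / (ℓ.linear v)) • v = ((-ℓ 0) / (ℓ.linear v)) • v +ᵥ (0 : V n)
      from (add_zero _).symm]
    rw [AffineMap.map_vadd]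
    rfl
  show ℓ _ = 0
  rw [hdecomp, LinearMap.map_smul, smul_eq_mul, div_mul_cancel₀ _ hv, neg_add_cancel]

/-- The cell cut out by the sign vector `σ` inside `x₀ + U₀`. -/
def cellSet {n : ℕ} (x₀ : V n) (U₀ : Submodule ℝ (V n)) {ι : Type} (ℓ : ι → AffForm n)
    (σ : ι → SignType) : Set (V n) :=
  {x | x - x₀ ∈ U₀ ∧ ∀ i, SignType.sign (ℓ i x) = σ i}

/-- The direction space of a cell. -/
def cellDir {n : ℕ} (U₀ : Submodule ℝ (V n)) {ι : Type} (ℓ : ι → AffForm n)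
    (σ : ι → SignType) : Submodule ℝ (V n) :=
  U₀ ⊓ ⨅ i ∈ {i | σ i = 0}, LinearMap.ker (ℓ i).linear

lemma mem_cellDir {n : ℕ} (U₀ : Submodule ℝ (V n)) {ι : Type} (ℓ : ι → AffForm n)
    (σ : ι → SignType) (u : V n) :
    u ∈ cellDir U₀ ℓ σ ↔ u ∈ U₀ ∧ ∀ i, σ i = 0 → (ℓ i).linear u = 0 := by
  simp [cellDir, Submodule.mem_inf, Submodule.mem_iInf]

lemma aff_add {n : ℕ} (ℓ : AffForm n) (x u : V n) : ℓ (x + u) = ℓ x + ℓ.linear u := by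
  have := ℓ.map_vadd x u
  simp only [vadd_eq_add] at this
  rw [add_comm x u, this, add_comm]

lemma aff_comb {n : ℕ} (ℓ : AffForm n) (x y : V n) (t : ℝ) :
    ℓ (x + t • (y - x)) = (1 - t) * ℓ x + t * ℓ y := by
  have h1 := aff_add ℓ x (y - x)
  rw [add_sub_cancel] at h1
  rw [aff_add, map_smul, smul_eq_mul, h1]
  ring

lemma sign_comb (a b t : ℝ) (s : SignType) (h0 : 0 ≤ t) (h1 : t ≤ 1)
    (ha : SignType.sign a = s) (hb : SignType.sign b = s) :
    SignType.sign ((1 - t) * a + t * b) = s := by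
  rcases lt_trichotomy a 0 with h | h | h
  · rw [sign_neg h] at ha
    subst ha
    rw [sign_eq_neg_one_iff] at hb ⊢
    rcases h0.eq_or_lt with h | h
    · subst h; simpa
    · nlinarith [mul_nonneg (sub_nonneg.2 h1) (neg_nonneg.2 (le_of_lt ‹a < 0›)),
        mul_pos h (neg_pos.2 hb)]
  · subst h
    rw [sign_zero] at ha
    subst ha
    rw [sign_eq_zero_iff] at hb
    subst hb
    simp
  · rw [sign_pos h] at ha
    subst ha
    rw [sign_eq_one_iff] at hb ⊢
    rcases h0.eq_or_lt with h | h
    · subst h; simpa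
    · nlinarith [mul_nonneg (sub_nonneg.2 h1) (le_of_lt ‹0 < a›), mul_pos h hb]

/-- Cells are open in their affine span. -/
lemma cell_open {n : ℕ} (x₀ : V n) (U₀ : Submodule ℝ (V n)) {ι : Type} [Finite ι]
    (ℓ : ι → AffForm n) (σ : ι → SignType) (x u : V n) (hx : x ∈ cellSet x₀ U₀ ℓ σ)
    (hu : u ∈ cellDir U₀ ℓ σ) :
    ∃ t : ℝ, 0 < t ∧ x + t • u ∈ cellSet x₀ U₀ ℓ σ ∧ x - t • u ∈ cellSet x₀ U₀ ℓ σ := by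
  rw [mem_cellDir] at hu
  have key : ∀ᶠ t in nhds (0:ℝ), ∀ i, SignType.sign (ℓ i (x + t • u)) = σ i := by
    rw [Filter.eventually_all]
    intro i
    have hc : Continuous fun t : ℝ => ℓ i x + t * (ℓ i).linear u := by fun_prop
    have hi := hx.2 i
    simp only [aff_add, map_smul, smul_eq_mul]
    rcases lt_trichotomy (ℓ i x) 0 with h | h | h
    · rw [sign_neg h] at hi
      have := hc.continuousAt.eventually_lt (f := fun t : ℝ => ℓ i x + t * (ℓ i).linear u)
        (g := fun _ => 0) (x₀ := 0) continuousAt_const (by simpa)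
      filter_upwards [this] with t ht
      rw [← hi, sign_neg ht]
    · rw [h, sign_zero] at hi
      filter_upwards with t
      rw [hu.2 i hi.symm, h, ← hi]; simp
    · rw [sign_pos h] at hi
      have := ContinuousAt.eventually_lt (f := fun _ => 0)
        (g := fun t : ℝ => ℓ i x + t * (ℓ i).linear u) (x₀ := 0) continuousAt_const
        hc.continuousAt (by simpa)
      filter_upwards [this] with t ht
      rw [← hi, sign_pos ht]
  obtain ⟨ε, hε, hb⟩ := Metric.eventually_nhds_iff.1 key
  refine ⟨ε / 2, by positivity, ⟨?_, ?_⟩, ?_, ?_⟩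
  · rw [add_sub_right_comm]
    exact U₀.add_mem hx.1 (U₀.smul_mem _ hu.1)
  · exact hb (by rw [Real.dist_0_eq_abs, abs_of_pos (by positivity)]; linarith)
  · rw [sub_right_comm]
    exact U₀.sub_mem hx.1 (U₀.smul_mem _ hu.1)
  · have := hb (y := -(ε/2)) (by rw [Real.dist_0_eq_abs, abs_neg, abs_of_pos (by positivity)]; linarith)
    simpa [sub_eq_add_neg] using this

/-- Cells are convex. -/
lemma cell_convex {n : ℕ} (x₀ : V n) (U₀ : Submodule ℝ (V n)) {ι : Type}
    (ℓ : ι → AffForm n) (σ : ι → SignType) (x y : V n) (hx : x ∈ cellSet x₀ U₀ ℓ σ)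
    (hy : y ∈ cellSet x₀ U₀ ℓ σ) (t : ℝ) (h0 : 0 ≤ t) (h1 : t ≤ 1) :
    x + t • (y - x) ∈ cellSet x₀ U₀ ℓ σ := by
  refine ⟨?_, fun i => ?_⟩
  · rw [add_sub_right_comm]
    refine U₀.add_mem hx.1 (U₀.smul_mem _ ?_)
    simpa using U₀.sub_mem hy.1 hx.1
  · rw [aff_comb]
    exact sign_comb _ _ _ _ h0 h1 (hx.2 i) (hy.2 i)

lemma sub_mem_cellDir {n : ℕ} (x₀ : V n) (U₀ : Submodule ℝ (V n)) {ι : Type}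
    (ℓ : ι → AffForm n) (σ : ι → SignType) (x y : V n) (hx : x ∈ cellSet x₀ U₀ ℓ σ)
    (hy : y ∈ cellSet x₀ U₀ ℓ σ) : y - x ∈ cellDir U₀ ℓ σ := by
  rw [mem_cellDir]
  refine ⟨by simpa using U₀.sub_mem hy.1 hx.1, fun i hi => ?_⟩
  have h1 := aff_add (ℓ i) x (y - x)
  have h2 := hx.2 i
  have h3 := hy.2 i
  rw [hi, sign_eq_zero_iff] at h2 h3
  rw [add_sub_cancel, h2, h3] at h1
  linarith

lemma finrank_inf_ker {n : ℕ} (U : Submodule ℝ (V n)) (f : V n →ₗ[ℝ] ℝ) (u : V n)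
    (hu : u ∈ U) (hf : f u ≠ 0) :
    Module.finrank ℝ U = Module.finrank ℝ (U ⊓ LinearMap.ker f : Submodule ℝ (V n)) + 1 := by
  have h := LinearMap.finrank_range_add_finrank_ker (f.domRestrict U)
  have hs : Function.Surjective (f.domRestrict U) := by
    intro c
    refine ⟨(c / f u) • ⟨u, hu⟩, ?_⟩
    simp [hf]
  rw [LinearMap.range_eq_top.2 hs, finrank_top, Module.finrank_self] at h
  have e : Module.finrank ℝ (LinearMap.ker (f.domRestrict U))
      = Module.finrank ℝ (U ⊓ LinearMap.ker f : Submodule ℝ (V n)) := by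
    rw [(Submodule.equivSubtypeMap U (LinearMap.ker (f.domRestrict U))).finrank_eq,
      LinearMap.ker_domRestrict, Submodule.map_comap_subtype]
  omega

lemma cellSet_option {n : ℕ} (x₀ : V n) (U₀ : Submodule ℝ (V n)) {ι : Type}
    (ℓ : Option ι → AffForm n) (σ : Option ι → SignType) (x : V n) :
    x ∈ cellSet x₀ U₀ ℓ σ ↔ x ∈ cellSet x₀ U₀ (fun i => ℓ (some i)) (fun i => σ (some i)) ∧
      SignType.sign (ℓ none x) = σ none := by
  simp only [cellSet, Set.mem_setOf_eq, Option.forall]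
  tauto

lemma cellDir_option_ne {n : ℕ} (U₀ : Submodule ℝ (V n)) {ι : Type}
    (ℓ : Option ι → AffForm n) (σ : Option ι → SignType) (h : σ none ≠ 0) :
    cellDir U₀ ℓ σ = cellDir U₀ (fun i => ℓ (some i)) (fun i => σ (some i)) := by
  ext u
  simp only [mem_cellDir, Option.forall]
  tauto

lemma cellDir_option_zero {n : ℕ} (U₀ : Submodule ℝ (V n)) {ι : Type}
    (ℓ : Option ι → AffForm n) (σ : Option ι → SignType) (h : σ none = 0) :
    cellDir U₀ ℓ σ = cellDir U₀ (fun i => ℓ (some i)) (fun i => σ (some i)) ⊓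
      LinearMap.ker (ℓ none).linear := by
  ext u
  simp only [mem_cellDir, Option.forall, Submodule.mem_inf, LinearMap.mem_ker]
  tauto

open Classical in
/-- The signed contribution of a cell. -/
def cellWt {n : ℕ} (x₀ : V n) (U₀ : Submodule ℝ (V n)) {ι : Type} (ℓ : ι → AffForm n)
    (σ : ι → SignType) : ℝ :=
  if (cellSet x₀ U₀ ℓ σ).Nonempty then (-1) ^ Module.finrank ℝ (cellDir U₀ ℓ σ) else 0

lemma sum_signType (f : SignType → ℝ) : ∑ s, f s = f 0 + f (-1) + f 1 := by
  have : (univ : Finset SignType) = {0, -1, 1} := by decide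
  rw [this]
  rw [sum_insert (by decide), sum_insert (by decide), sum_singleton, add_assoc]

/-- Cutting a cell by one more hyperplane preserves the signed count. -/
lemma cellWt_split {n : ℕ} (x₀ : V n) (U₀ : Submodule ℝ (V n)) {ι : Type} [Finite ι]
    (ℓ : Option ι → AffForm n) (τ : ι → SignType) :
    ∑ s : SignType, cellWt x₀ U₀ ℓ ((Equiv.piOptionEquivProd (β := fun _ => SignType)).symm (s, τ))
      = cellWt x₀ U₀ (fun i => ℓ (some i)) τ := by
  set σ : SignType → Option ι → SignType :=
    fun s => (Equiv.piOptionEquivProd (β := fun _ => SignType)).symm (s, τ) with hσ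
  have hn : ∀ s, σ s none = s := fun s => rfl
  have hs : ∀ s, (fun i => σ s (some i)) = τ := fun s => rfl
  set ℓ' : ι → AffForm n := fun i => ℓ (some i) with hℓ'
  have hC : ∀ s x, x ∈ cellSet x₀ U₀ ℓ (σ s) ↔
      x ∈ cellSet x₀ U₀ ℓ' τ ∧ SignType.sign (ℓ none x) = s := by
    intro s x
    rw [cellSet_option, hn, hs]
  have hD0 : cellDir U₀ ℓ (σ 0) = cellDir U₀ ℓ' τ ⊓ LinearMap.ker (ℓ none).linear :=
    cellDir_option_zero U₀ ℓ (σ 0) rfl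
  have hD1 : cellDir U₀ ℓ (σ 1) = cellDir U₀ ℓ' τ :=
    cellDir_option_ne U₀ ℓ (σ 1) (by rw [hn]; decide)
  have hD2 : cellDir U₀ ℓ (σ (-1)) = cellDir U₀ ℓ' τ :=
    cellDir_option_ne U₀ ℓ (σ (-1)) (by rw [hn]; decide)
  have hR1 : Module.finrank ℝ (cellDir U₀ ℓ (σ 1)) = Module.finrank ℝ (cellDir U₀ ℓ' τ) := by
    rw [hD1]
  have hR2 : Module.finrank ℝ (cellDir U₀ ℓ (σ (-1))) = Module.finrank ℝ (cellDir U₀ ℓ' τ) := by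
    rw [hD2]
  rw [sum_signType]
  change cellWt x₀ U₀ ℓ (σ 0) + cellWt x₀ U₀ ℓ (σ (-1)) + cellWt x₀ U₀ ℓ (σ 1) = _
  by_cases hne : (cellSet x₀ U₀ ℓ' τ).Nonempty
  swap
  · have : ∀ s, ¬ (cellSet x₀ U₀ ℓ (σ s)).Nonempty := by
      rintro s ⟨x, hx⟩
      exact hne ⟨x, ((hC s x).1 hx).1⟩
    simp [cellWt, this, hne]
  by_cases hlin : ∀ u ∈ cellDir U₀ ℓ' τ, (ℓ none).linear u = 0
  · -- the new functional is constant on the cell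
    have hD0' : cellDir U₀ ℓ (σ 0) = cellDir U₀ ℓ' τ := by
      rw [hD0]
      exact inf_eq_left.2 fun u hu => hlin u hu
    have hR0 : Module.finrank ℝ (cellDir U₀ ℓ (σ 0)) = Module.finrank ℝ (cellDir U₀ ℓ' τ) := by
      rw [hD0']
    obtain ⟨x, hx⟩ := hne
    have hconst : ∀ s, (cellSet x₀ U₀ ℓ (σ s)).Nonempty ↔ SignType.sign (ℓ none x) = s := by
      intro s
      constructor
      · rintro ⟨y, hy⟩
        rw [hC] at hy
        have h1 := aff_add (ℓ none) x (y - x)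
        rw [hlin _ (sub_mem_cellDir x₀ U₀ ℓ' τ x y hx hy.1), add_sub_cancel, add_zero] at h1
        rw [← h1]
        exact hy.2
      · intro h
        exact ⟨x, (hC s x).2 ⟨hx, h⟩⟩
    have hne : (cellSet x₀ U₀ ℓ' τ).Nonempty := ⟨x, hx⟩
    simp only [cellWt, hconst, hR0, hR1, hR2, hne, if_true]
    generalize SignType.sign (ℓ none x) = s
    cases s <;> simp
  · push Not at hlin
    obtain ⟨u, hu, hun⟩ := hlin
    obtain ⟨u, hu, hup⟩ : ∃ u ∈ cellDir U₀ ℓ' τ, 0 < (ℓ none).linear u := by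
      rcases lt_or_gt_of_ne hun with h | h
      · exact ⟨-u, Submodule.neg_mem _ hu, by rw [map_neg]; linarith⟩
      · exact ⟨u, hu, h⟩
    have hrank := finrank_inf_ker _ _ u hu hup.ne'
    rw [← hD0] at hrank
    have h01 : (cellSet x₀ U₀ ℓ (σ 0)).Nonempty →
        (cellSet x₀ U₀ ℓ (σ 1)).Nonempty ∧ (cellSet x₀ U₀ ℓ (σ (-1))).Nonempty := by
      rintro ⟨x, hx⟩
      rw [hC, sign_eq_zero_iff] at hx
      obtain ⟨t, ht, h1, h2⟩ := cell_open x₀ U₀ ℓ' τ x u hx.1 hu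
      refine ⟨⟨_, (hC _ _).2 ⟨h1, ?_⟩⟩, ⟨_, (hC _ _).2 ⟨h2, ?_⟩⟩⟩
      · rw [aff_add, hx.2, map_smul, smul_eq_mul, sign_eq_one_iff]
        have := mul_pos ht hup
        linarith
      · rw [sub_eq_add_neg, aff_add, hx.2, map_neg, map_smul, smul_eq_mul, sign_eq_neg_one_iff]
        have := mul_pos ht hup
        linarith
    have h10 : (cellSet x₀ U₀ ℓ (σ 1)).Nonempty → (cellSet x₀ U₀ ℓ (σ (-1))).Nonempty →
        (cellSet x₀ U₀ ℓ (σ 0)).Nonempty := by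
      rintro ⟨x, hx⟩ ⟨y, hy⟩
      rw [hC, sign_eq_one_iff] at hx
      rw [hC, sign_eq_neg_one_iff] at hy
      have hpos : 0 < ℓ none x - ℓ none y := by linarith [hx.2, hy.2]
      refine ⟨x + (ℓ none x / (ℓ none x - ℓ none y)) • (y - x), (hC _ _).2 ⟨?_, ?_⟩⟩
      · refine cell_convex x₀ U₀ ℓ' τ x y hx.1 hy.1 _ (div_nonneg hx.2.le hpos.le) ?_
        rw [div_le_one hpos]
        linarith [hy.2]
      · rw [aff_comb, sign_eq_zero_iff]
        field_simp
        ring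
    have hsome : (cellSet x₀ U₀ ℓ (σ 0)).Nonempty ∨ (cellSet x₀ U₀ ℓ (σ (-1))).Nonempty ∨
        (cellSet x₀ U₀ ℓ (σ 1)).Nonempty := by
      obtain ⟨x, hx⟩ := hne
      have := (hC _ x).2 ⟨hx, rfl⟩
      generalize SignType.sign (ℓ none x) = s at this
      cases s
      · exact Or.inl ⟨x, this⟩
      · exact Or.inr (Or.inl ⟨x, this⟩)
      · exact Or.inr (Or.inr ⟨x, this⟩)
    simp only [cellWt, hR1, hR2, hne, if_true, hrank, pow_succ]
    by_cases h0 : (cellSet x₀ U₀ ℓ (σ 0)).Nonempty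
    · simp only [h0, (h01 h0).1, (h01 h0).2, if_true]
      ring
    · by_cases h1 : (cellSet x₀ U₀ ℓ (σ 1)).Nonempty
      · have h2 : ¬ (cellSet x₀ U₀ ℓ (σ (-1))).Nonempty := fun h => h0 (h10 h1 h)
        simp [h0, h1, h2]
      · have h2 : (cellSet x₀ U₀ ℓ (σ (-1))).Nonempty := by tauto
        simp [h0, h1, h2]

/-- Euler characteristic of an arrangement in an affine subspace. -/
lemma sum_cellWt_fin {n : ℕ} (x₀ : V n) (U₀ : Submodule ℝ (V n)) (m : ℕ) :
    ∀ (ι : Type) [Fintype ι] [DecidableEq ι], Fintype.card ι = m → ∀ ℓ : ι → AffForm n,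
    ∑ σ : ι → SignType, cellWt x₀ U₀ ℓ σ = (-1) ^ Module.finrank ℝ U₀ := by
  induction m with
  | zero =>
    intro ι _ _ hc ℓ
    have := Fintype.card_eq_zero_iff.1 hc
    rw [Fintype.sum_unique]
    have h1 : ∀ σ, (cellSet x₀ U₀ ℓ σ).Nonempty := fun σ => ⟨x₀, by simp [cellSet]⟩
    have h2 : ∀ σ, cellDir U₀ ℓ σ = U₀ := by
      intro σ
      ext u
      simp [mem_cellDir]
    rw [cellWt, if_pos (h1 _), h2]
  | succ m ih =>
    intro ι _ _ hc ℓ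
    have e : ι ≃ Option (Fin m) := Fintype.equivOfCardEq (by simp [hc])
    have h1 : ∑ σ : ι → SignType, cellWt x₀ U₀ ℓ σ
        = ∑ σ : Option (Fin m) → SignType, cellWt x₀ U₀ (fun i => ℓ (e.symm i)) σ := by
      refine Fintype.sum_equiv (Equiv.arrowCongr e (Equiv.refl _)) _ _ fun σ => ?_
      have hs : cellSet x₀ U₀ ℓ σ = cellSet x₀ U₀ (fun i => ℓ (e.symm i))
          ((Equiv.arrowCongr e (Equiv.refl _)) σ) := by
        ext x
        simp only [cellSet, Set.mem_setOf_eq, Equiv.arrowCongr_apply, Function.comp, Equiv.coe_refl,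
          id]
        rw [← e.symm.forall_congr_right]
      have hd : cellDir U₀ ℓ σ = cellDir U₀ (fun i => ℓ (e.symm i))
          ((Equiv.arrowCongr e (Equiv.refl _)) σ) := by
        ext x
        simp only [mem_cellDir, Equiv.arrowCongr_apply, Function.comp, Equiv.coe_refl, id]
        rw [← e.symm.forall_congr_right]
      rw [cellWt, cellWt, hs, hd]
    rw [h1, ← Equiv.sum_comp (Equiv.piOptionEquivProd (β := fun _ => SignType)).symm,
      Fintype.sum_prod_type_right]
    rw [← ih (Fin m) (by simp) (fun i => ℓ (e.symm (some i)))]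
    exact sum_congr rfl fun τ _ => cellWt_split x₀ U₀ (fun i => ℓ (e.symm i)) τ

/-- The direction space of an intersection of hyperplanes. -/
lemma vectorSpan_inter {n : ℕ} (𝒜 : Finset (AffForm n)) (P : Idx 𝒜 → Prop) (x : V n)
    (hx : x ∈ ⋂ ℓ ∈ {ℓ : Idx 𝒜 | P ℓ}, hypSet ℓ.1) (u : V n) :
    u ∈ vectorSpan ℝ (⋂ ℓ ∈ {ℓ : Idx 𝒜 | P ℓ}, hypSet ℓ.1) ↔
      ∀ ℓ : Idx 𝒜, P ℓ → ℓ.1.linear u = 0 := by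
  simp only [Set.mem_iInter, Set.mem_setOf_eq, hypSet] at hx
  constructor
  · intro hu
    have hle : vectorSpan ℝ (⋂ ℓ ∈ {ℓ : Idx 𝒜 | P ℓ}, hypSet ℓ.1) ≤
        ⨅ ℓ : Idx 𝒜, ⨅ _ : P ℓ, LinearMap.ker ℓ.1.linear := by
      rw [vectorSpan, Submodule.span_le]
      rintro _ ⟨a, ha, b, hb, rfl⟩
      simp only [Set.mem_iInter, Set.mem_setOf_eq, hypSet] at ha hb
      simp only [SetLike.mem_coe, Submodule.mem_iInf, LinearMap.mem_ker]
      intro ℓ hℓ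
      rw [AffineMap.linearMap_vsub, ha ℓ hℓ, hb ℓ hℓ, vsub_self]
    have := hle hu
    simpa only [Submodule.mem_iInf, LinearMap.mem_ker] using this
  · intro hu
    have h2 : x + u ∈ ⋂ ℓ ∈ {ℓ : Idx 𝒜 | P ℓ}, hypSet ℓ.1 := by
      simp only [Set.mem_iInter, Set.mem_setOf_eq, hypSet]
      intro ℓ hℓ
      rw [aff_add, hx ℓ hℓ, hu ℓ hℓ, add_zero]
    have h1 : x ∈ ⋂ ℓ ∈ {ℓ : Idx 𝒜 | P ℓ}, hypSet ℓ.1 := by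
      simpa only [Set.mem_iInter, Set.mem_setOf_eq, hypSet] using hx
    simpa using vsub_mem_vectorSpan ℝ h2 h1

lemma mem_supp_of_mem {n : ℕ} (𝒜 : Finset (AffForm n)) (F : Face 𝒜) (x : V n)
    (hx : x ∈ faceSet 𝒜 F.sgn) : x ∈ (supp 𝒜 F).1 := by
  simp only [supp, Set.mem_iInter, Set.mem_setOf_eq, hypSet]
  intro ℓ hℓ
  have := hx ℓ
  rwa [hℓ, sign_eq_zero_iff] at this

open Classical in
lemma sum_faces {n : ℕ} (𝒜 : Finset (AffForm n)) (X : Flat 𝒜) :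
    (∑ F : Face 𝒜, if supp 𝒜 F ≤ X then (-1 : ℝ) ^ dimS (supp 𝒜 F).1 else 0)
      = (-1) ^ dimS X.1 := by
  obtain ⟨x₀, hx₀⟩ := X.2.1
  obtain ⟨P, hP⟩ := X.2.2
  have hX : ∀ x, x ∈ X.1 ↔ ∀ ℓ : Idx 𝒜, P ℓ → ℓ.1 x = 0 := by
    intro x
    rw [hP]
    simp only [Set.mem_iInter, Set.mem_setOf_eq, hypSet]
  have hU : ∀ u, u ∈ vectorSpan ℝ X.1 ↔ ∀ ℓ : Idx 𝒜, P ℓ → ℓ.1.linear u = 0 := by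
    intro u
    have := vectorSpan_inter 𝒜 P x₀ (hP ▸ hx₀) u
    rwa [← hP] at this
  have hXU : ∀ x, x - x₀ ∈ vectorSpan ℝ X.1 ↔ x ∈ X.1 := by
    intro x
    rw [hU, hX]
    refine forall₂_congr fun ℓ hℓ => ?_
    have h1 := aff_add ℓ.1 x₀ (x - x₀)
    rw [add_sub_cancel, (hX x₀).1 hx₀ ℓ hℓ, zero_add] at h1
    rw [h1]
  have hE := sum_cellWt_fin x₀ (vectorSpan ℝ X.1) _ (Idx 𝒜) rfl (fun ℓ => ℓ.1)
  rw [dimS, ← hE]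
  have hinj : Function.Injective (Face.sgn (𝒜 := 𝒜)) := fun F G h => Face.ext h
  have hcell : ∀ σ x, x ∈ cellSet x₀ (vectorSpan ℝ X.1) (fun ℓ : Idx 𝒜 => ℓ.1) σ ↔
      x ∈ X.1 ∧ x ∈ faceSet 𝒜 σ := by
    intro σ x
    rw [← hXU x]
    rfl
  refine Finset.sum_of_injOn Face.sgn hinj.injOn (fun _ _ => mem_coe.2 (mem_univ _)) ?_ ?_
  · intro σ _ hσ
    rw [cellWt, if_neg]
    rintro ⟨x, hx⟩
    exact hσ ⟨⟨σ, ⟨x, ((hcell σ x).1 hx).2⟩⟩, mem_coe.2 (mem_univ _), rfl⟩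
  · intro F _
    by_cases hF : (cellSet x₀ (vectorSpan ℝ X.1) (fun ℓ : Idx 𝒜 => ℓ.1) F.sgn).Nonempty
    · obtain ⟨x, hx⟩ := hF
      obtain ⟨hxX, hxF⟩ := (hcell _ _).1 hx
      have hz : ∀ ℓ, P ℓ → F.sgn ℓ = 0 := by
        intro ℓ hℓ
        rw [← hxF ℓ, (hX x).1 hxX ℓ hℓ, sign_zero]
      have hle : supp 𝒜 F ≤ X := by
        intro y hy
        simp only [supp, Set.mem_iInter, Set.mem_setOf_eq, hypSet] at hy
        rw [hX]
        exact fun ℓ hℓ => hy ℓ (hz ℓ hℓ)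
      rw [if_pos hle, cellWt, if_pos ⟨x, hx⟩, dimS]
      have : vectorSpan ℝ (supp 𝒜 F).1
          = cellDir (vectorSpan ℝ X.1) (fun ℓ : Idx 𝒜 => ℓ.1) F.sgn := by
        ext u
        rw [mem_cellDir, hU]
        have := vectorSpan_inter 𝒜 (fun ℓ => F.sgn ℓ = 0) x (mem_supp_of_mem 𝒜 F x hxF) u
        refine Iff.trans this ?_
        exact ⟨fun h => ⟨fun ℓ hℓ => h ℓ (hz ℓ hℓ), h⟩, fun h => h.2⟩
      rw [this]
    · rw [cellWt, if_neg hF, if_neg]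
      intro hle
      obtain ⟨x, hx⟩ := F.nonempty
      exact hF ⟨x, (hcell _ _).2 ⟨hle (mem_supp_of_mem 𝒜 F x hx), hx⟩⟩

open Classical in
/-- The dual Möbius recursion. -/
lemma moebius_dual {n : ℕ} (𝒜 : Finset (AffForm n)) (μ : Flat 𝒜 → Flat 𝒜 → ℝ)
    (hμ : IsMoebius 𝒜 μ) (X Y : Flat 𝒜) :
    (∑ Z : Flat 𝒜, if X ≤ Z then μ Z Y else 0) = if X = Y then 1 else 0 := by
  let M : Matrix (Flat 𝒜) (Flat 𝒜) ℝ := Matrix.of μ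
  let T : Matrix (Flat 𝒜) (Flat 𝒜) ℝ := Matrix.of fun X Y => if X ≤ Y then 1 else 0
  have h : M * T = 1 := by
    ext A B
    rw [Matrix.mul_apply, Matrix.one_apply]
    have hterm : ∀ Z, M A Z * T Z B = if A ≤ Z ∧ Z ≤ B then μ A Z else 0 := by
      intro Z
      simp only [M, T, Matrix.of_apply]
      by_cases h1 : A ≤ Z
      · simp [h1]
      · simp [h1, hμ.2.2 A Z h1]
    simp only [hterm]
    by_cases hAB : A = B
    · subst hAB
      rw [if_pos rfl, Finset.sum_eq_single A]
      · simp [hμ.1]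
      · intro Z _ hZ
        rw [if_neg]
        rintro ⟨h1, h2⟩
        exact hZ (le_antisymm h2 h1)
      · simp
    · rw [if_neg hAB]
      by_cases hle : A ≤ B
      · convert hμ.2.1 A B (lt_of_le_of_ne hle hAB)
      · refine Finset.sum_eq_zero fun Z _ => if_neg ?_
        rintro ⟨h1, h2⟩
        exact hle (h1.trans h2)
  have h' : T * M = 1 := mul_eq_one_comm.1 h
  have := congrFun (congrFun h' X) Y
  rw [Matrix.mul_apply, Matrix.one_apply] at this
  simpa [M, T] using this

lemma supp_eq_top_iff {n : ℕ} (𝒜 : Finset (AffForm n)) (h𝒜 : ∀ ℓ ∈ 𝒜, ℓ.linear ≠ 0)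
    (F : Face 𝒜) : supp 𝒜 F = topFlat 𝒜 ↔ IsChamber 𝒜 F := by
  constructor
  · intro h ℓ hℓ
    apply h𝒜 ℓ.1 ℓ.2
    have hv : ∀ x, ℓ.1 x = 0 := by
      intro x
      have hx : x ∈ (supp 𝒜 F).1 := by rw [h]; trivial
      simp only [supp, Set.mem_iInter, Set.mem_setOf_eq, hypSet] at hx
      exact hx ℓ hℓ
    ext u
    have := aff_add ℓ.1 0 u
    rw [hv, hv] at this
    simpa using this.symm
  · intro h
    apply Subtype.ext
    have : {ℓ : Idx 𝒜 | F.sgn ℓ = 0} = ∅ := by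
      ext ℓ
      simpa using h ℓ
    simp [supp, topFlat, this]

lemma dimS_top (n : ℕ) : dimS (Set.univ : Set (V n)) = n := by
  have h : vectorSpan ℝ (Set.univ : Set (V n)) = ⊤ := by
    rw [eq_top_iff]
    intro u _
    simpa using vsub_mem_vectorSpan ℝ (Set.mem_univ u) (Set.mem_univ (0 : V n))
  rw [dimS, h, finrank_top]
  simp

open Classical in
/-- **Zaslavsky's formula.** The number of chambers of `𝒜` equals
`(-1)^{rk 𝒜} χ(𝒜, -1) = Σ_Y (-1)^{rk 𝒜 - rk Y} μ(Y, ⊤)`. -/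
theorem zaslavsky_chambers {n : ℕ} (𝒜 : Finset (AffForm n))
    (h𝒜 : ∀ ℓ ∈ 𝒜, ℓ.linear ≠ 0)
    (d : ℕ) (hd : ∀ X : Flat 𝒜, IsMin X → dimS X.1 = d)
    (μ : Flat 𝒜 → Flat 𝒜 → ℝ) (hμ : IsMoebius 𝒜 μ) :
    ((univ.filter (fun C : Face 𝒜 => IsChamber 𝒜 C)).card : ℝ)
        = (-1 : ℝ) ^ (n - d) * charPolyUnder 𝒜 μ d (topFlat 𝒜) (-1) ∧
    ((univ.filter (fun C : Face 𝒜 => IsChamber 𝒜 C)).card : ℝ)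
        = ∑ Y : Flat 𝒜, (-1 : ℝ) ^ ((n - d) - (dimS Y.1 - d)) * μ Y (topFlat 𝒜) := by
  have hmain : (-1 : ℝ) ^ n * ((univ.filter (fun C : Face 𝒜 => IsChamber 𝒜 C)).card : ℝ)
      = ∑ Y : Flat 𝒜, (-1 : ℝ) ^ dimS Y.1 * μ Y (topFlat 𝒜) := by
    symm
    calc ∑ Y : Flat 𝒜, (-1 : ℝ) ^ dimS Y.1 * μ Y (topFlat 𝒜)
        = ∑ Y : Flat 𝒜, ∑ F : Face 𝒜, (-1 : ℝ) ^ dimS (supp 𝒜 F).1 *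
            (if supp 𝒜 F ≤ Y then μ Y (topFlat 𝒜) else 0) := by
          refine sum_congr rfl fun Y _ => ?_
          rw [← sum_faces 𝒜 Y, sum_mul]
          refine sum_congr rfl fun F _ => ?_
          split_ifs <;> simp
      _ = ∑ F : Face 𝒜, (-1 : ℝ) ^ dimS (supp 𝒜 F).1 *
            (if supp 𝒜 F = topFlat 𝒜 then 1 else 0) := by
          rw [sum_comm]
          refine sum_congr rfl fun F _ => ?_
          rw [← mul_sum, moebius_dual 𝒜 μ hμ]
      _ = ∑ F : Face 𝒜, (-1 : ℝ) ^ n * (if IsChamber 𝒜 F then 1 else 0) := by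
          refine sum_congr rfl fun F _ => ?_
          by_cases h : supp 𝒜 F = topFlat 𝒜
          · rw [if_pos h, if_pos ((supp_eq_top_iff 𝒜 h𝒜 F).1 h), h]
            congr 2
            exact dimS_top n
          · rw [if_neg h, if_neg (fun h' => h ((supp_eq_top_iff 𝒜 h𝒜 F).2 h')), mul_zero, mul_zero]
      _ = _ := by
          rw [← mul_sum, sum_boole]
  have hdim : ∀ Y : Flat 𝒜, d ≤ dimS Y.1 ∧ dimS Y.1 ≤ n := by
    intro Y
    constructor
    · obtain ⟨Z, hZY, hZ⟩ := Finite.exists_le_minimal (p := fun _ : Flat 𝒜 => True) (a := Y) trivial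
      have hZm : IsMin Z := fun W hW => hZ.2 trivial hW
      rw [← hd Z hZm]
      exact Submodule.finrank_mono (vectorSpan_mono ℝ hZY)
    · calc dimS Y.1 ≤ Module.finrank ℝ (V n) := Submodule.finrank_le _
        _ = n := by simp
  have hcard : ((univ.filter (fun C : Face 𝒜 => IsChamber 𝒜 C)).card : ℝ)
      = ∑ Y : Flat 𝒜, (-1 : ℝ) ^ ((n - d) - (dimS Y.1 - d)) * μ Y (topFlat 𝒜) := by
    have hsq : (-1 : ℝ) ^ n * (-1) ^ n = 1 := by
      rw [← mul_pow]; simp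
    have hmul := congrArg (fun z => (-1 : ℝ) ^ n * z) hmain
    simp only [← mul_assoc, hsq, one_mul] at hmul
    rw [hmul, mul_sum]
    refine sum_congr rfl fun Y _ => ?_
    obtain ⟨h1, h2⟩ := hdim Y
    rw [← mul_assoc, ← pow_add]
    congr 1
    have : n + dimS Y.1 = (n - d - (dimS Y.1 - d)) + 2 * dimS Y.1 := by omega
    rw [this, pow_add, pow_mul]
    simp
  refine ⟨?_, hcard⟩
  rw [hcard, charPolyUnder, mul_sum]
  refine sum_congr rfl fun Y _ => ?_
  obtain ⟨h1, h2⟩ := hdim Y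
  have htop : Y ≤ topFlat 𝒜 := fun x _ => trivial
  rw [if_pos htop, mul_left_comm, ← pow_add, mul_comm]
  congr 1
  have : n - d + (dimS Y.1 - d) = (n - d - (dimS Y.1 - d)) + 2 * (dimS Y.1 - d) := by omega
  rw [this, pow_add, pow_mul]
  simp

end CharElts
end
end

section
/- (Kung's identity) For any hyperplane arrangement 𝒜 in ℝ^n and all s, t ∈ ℝ: χ(𝒜, st) = Σ_X t^{rk(X)} χ(𝒜^X, s) χ(𝒜_X, t), where the sum is over all flats X of 𝒜, and χ(𝒜_X, t) = Σ_{Y flat of 𝒜, X ⊆ Y} μ(Y, ⊤) t^{rk(Y) − rk(X)} is the characteristic polynomial of the subarrangement 𝒜_X = {H ∈ 𝒜 : X ⊆ H}. -/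
open Finset MeasureTheory

noncomputable section

namespace CharElts

variable {n : ℕ} (𝒜 : Finset (AffForm n))

open Classical in
/-- **Kung's identity.**
`χ(𝒜, st) = Σ_X t^{rk X} χ(𝒜^X, s) χ(𝒜_X, t)`, where the sum is over all flats `X`
and `χ(𝒜_X, t) = Σ_{Y ⊇ X} μ(Y, ⊤) t^{rk Y - rk X}` is the characteristic polynomial
of the arrangement over `X`. -/
theorem kung_identity {n : ℕ} (𝒜 : Finset (AffForm n))
    (h𝒜 : ∀ ℓ ∈ 𝒜, ℓ.linear ≠ 0)
    (d : ℕ) (hd : ∀ X : Flat 𝒜, IsMin X → dimS X.1 = d)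
    (μ : Flat 𝒜 → Flat 𝒜 → ℝ) (hμ : IsMoebius 𝒜 μ)
    (s t : ℝ) :
    charPolyUnder 𝒜 μ d (topFlat 𝒜) (s * t)
      = ∑ X : Flat 𝒜, t ^ (dimS X.1 - d) * charPolyUnder 𝒜 μ d X s *
          (∑ Y : Flat 𝒜, if X ≤ Y then
            μ Y (topFlat 𝒜) * t ^ ((dimS Y.1 - d) - (dimS X.1 - d)) else 0) := by
  obtain ⟨h1, h2, h3⟩ := hμ
  have hmono : ∀ X Y : Flat 𝒜, X ≤ Y → dimS X.1 - d ≤ dimS Y.1 - d := by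
    intro X Y h
    have hXY : X.1 ⊆ Y.1 := h
    exact Nat.sub_le_sub_right
      (Submodule.finrank_mono (vectorSpan_mono ℝ hXY)) d
  have key : ∀ Z Y : Flat 𝒜,
      (∑ X : Flat 𝒜, if Z ≤ X ∧ X ≤ Y then μ Z X else 0) = if Z = Y then 1 else 0 := by
    intro Z Y
    by_cases hZY : Z = Y
    · subst hZY
      rw [if_pos rfl, Finset.sum_eq_single Z]
      · simp [h1]
      · intro X _ hX
        rw [if_neg]
        rintro ⟨ha, hb⟩
        exact hX (le_antisymm hb ha)
      · simp
    · rw [if_neg hZY]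
      by_cases hle : Z ≤ Y
      · exact h2 Z Y (lt_of_le_of_ne hle hZY)
      · apply Finset.sum_eq_zero
        intro X _
        rw [if_neg]
        rintro ⟨ha, hb⟩
        exact hle (ha.trans hb)
  have hterm : ∀ X : Flat 𝒜, t ^ (dimS X.1 - d) * charPolyUnder 𝒜 μ d X s *
          (∑ Y : Flat 𝒜, if X ≤ Y then
            μ Y (topFlat 𝒜) * t ^ ((dimS Y.1 - d) - (dimS X.1 - d)) else 0)
      = ∑ Z : Flat 𝒜, ∑ Y : Flat 𝒜,
          s ^ (dimS Z.1 - d) * (μ Y (topFlat 𝒜) * t ^ (dimS Y.1 - d)) *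
            (if Z ≤ X ∧ X ≤ Y then μ Z X else 0) := by
    intro X
    rw [charPolyUnder, mul_assoc, Finset.sum_mul_sum, Finset.mul_sum]
    simp_rw [Finset.mul_sum]
    refine Finset.sum_congr rfl fun Z _ => Finset.sum_congr rfl fun Y _ => ?_
    by_cases hZ : Z ≤ X
    · by_cases hY : X ≤ Y
      · rw [if_pos hZ, if_pos hY, if_pos ⟨hZ, hY⟩, ← pow_mul_pow_sub t (hmono X Y hY)]
        ring
      · simp [hY]
    · simp [hZ]
  rw [Finset.sum_congr rfl fun X _ => hterm X, Finset.sum_comm, charPolyUnder]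
  refine Finset.sum_congr rfl fun Z _ => ?_
  rw [Finset.sum_comm, if_pos (show Z ≤ topFlat 𝒜 from Set.subset_univ Z.1)]
  simp_rw [← Finset.mul_sum, key]
  simp only [mul_ite, mul_one, mul_zero, Finset.sum_ite_eq, Finset.mem_univ, if_true]
  rw [mul_pow]
  ring

end CharElts
end
end

section
/- (Intermediate form of Kung's identity) For any hyperplane arrangement 𝒜 in ℝ^n and all s, t ∈ ℝ: χ(𝒜, st) = Σ χ(𝒜^X, s) χ(𝒜^Y, t), where the sum is over all pairs of flats (X, Y) of 𝒜 such that the join X ∨ Y equals ⊤, the join X ∨ Y being the smallest flat containing both X and Y. -/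
open Finset MeasureTheory

noncomputable section

namespace CharElts

variable {n : ℕ} (𝒜 : Finset (AffForm n))

/-- The join of two flats. -/
def joinFlat {n : ℕ} (𝒜 : Finset (AffForm n)) (X Y : Flat 𝒜) : Flat 𝒜 :=
  ⟨⋂ ℓ ∈ {ℓ : Idx 𝒜 | X.1 ⊆ hypSet ℓ.1 ∧ Y.1 ⊆ hypSet ℓ.1}, hypSet ℓ.1, by
    obtain ⟨x, hx⟩ := X.2.1
    refine ⟨⟨x, ?_⟩, _, rfl⟩
    simp only [Set.mem_iInter, Set.mem_setOf_eq]
    intro ℓ hℓ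
    exact hℓ.1 hx⟩

lemma joinFlat_le_iff {n : ℕ} (𝒜 : Finset (AffForm n)) (X Y Z : Flat 𝒜) :
    joinFlat 𝒜 X Y ≤ Z ↔ X ≤ Z ∧ Y ≤ Z := by
  have hX : X ≤ joinFlat 𝒜 X Y := by
    intro x hx
    change x ∈ ⋂ ℓ ∈ {ℓ : Idx 𝒜 | X.1 ⊆ hypSet ℓ.1 ∧ Y.1 ⊆ hypSet ℓ.1}, hypSet ℓ.1
    simp only [Set.mem_iInter, Set.mem_setOf_eq]
    intro ℓ hℓ
    exact hℓ.1 hx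
  have hY : Y ≤ joinFlat 𝒜 X Y := by
    intro x hx
    change x ∈ ⋂ ℓ ∈ {ℓ : Idx 𝒜 | X.1 ⊆ hypSet ℓ.1 ∧ Y.1 ⊆ hypSet ℓ.1}, hypSet ℓ.1
    simp only [Set.mem_iInter, Set.mem_setOf_eq]
    intro ℓ hℓ
    exact hℓ.2 hx
  refine ⟨fun h => ⟨hX.trans h, hY.trans h⟩, fun ⟨h1, h2⟩ => ?_⟩
  intro x hx
  change x ∈ ⋂ ℓ ∈ {ℓ : Idx 𝒜 | X.1 ⊆ hypSet ℓ.1 ∧ Y.1 ⊆ hypSet ℓ.1}, hypSet ℓ.1 at hx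
  change x ∈ Z.1
  rw [flat_eq_inter 𝒜 Z]
  simp only [Set.mem_iInter, Set.mem_setOf_eq] at hx ⊢
  intro ℓ hℓ
  exact hx ℓ ⟨subset_trans h1 hℓ, subset_trans h2 hℓ⟩

lemma le_topFlat {n : ℕ} (𝒜 : Finset (AffForm n)) (X : Flat 𝒜) : X ≤ topFlat 𝒜 :=
  fun _ _ => trivial

open Classical in
lemma moebius_left {n : ℕ} (𝒜 : Finset (AffForm n))
    (μ : Flat 𝒜 → Flat 𝒜 → ℝ) (hμ : IsMoebius 𝒜 μ) (X Y : Flat 𝒜) :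
    (∑ Z : Flat 𝒜, μ X Z * (if Z ≤ Y then 1 else 0)) = if X = Y then 1 else 0 := by
  obtain ⟨h1, h2, h3⟩ := hμ
  have key : (∑ Z : Flat 𝒜, μ X Z * (if Z ≤ Y then 1 else 0))
      = ∑ Z : Flat 𝒜, if X ≤ Z ∧ Z ≤ Y then μ X Z else 0 := by
    refine Finset.sum_congr rfl fun Z _ => ?_
    by_cases a : X ≤ Z
    · by_cases b : Z ≤ Y <;> simp [a, b]
    · simp [a, h3 X Z a]
  rw [key]
  by_cases e : X = Y
  · subst e
    rw [if_pos rfl, Finset.sum_eq_single X]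
    · simp [h1]
    · intro Z _ hZ
      rw [if_neg]
      rintro ⟨a, b⟩
      exact hZ (le_antisymm b a)
    · simp
  · rw [if_neg e]
    by_cases l : X ≤ Y
    · exact h2 X Y (lt_of_le_of_ne l e)
    · refine Finset.sum_eq_zero fun Z _ => ?_
      rw [if_neg]
      rintro ⟨a, b⟩
      exact l (a.trans b)

open Classical in
lemma moebius_right {n : ℕ} (𝒜 : Finset (AffForm n))
    (μ : Flat 𝒜 → Flat 𝒜 → ℝ) (hμ : IsMoebius 𝒜 μ) (X Y : Flat 𝒜) :
    (∑ Z : Flat 𝒜, (if X ≤ Z then 1 else 0) * μ Z Y) = if X = Y then 1 else 0 := by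
  have h : (Matrix.of μ) * (Matrix.of fun X Y : Flat 𝒜 => if X ≤ Y then (1 : ℝ) else 0) = 1 := by
    ext A B
    rw [Matrix.mul_apply, Matrix.one_apply]
    exact moebius_left 𝒜 μ hμ A B
  have h2 := mul_eq_one_comm.mp h
  have h' := congrFun (congrFun h2 X) Y
  rw [Matrix.mul_apply, Matrix.one_apply] at h'
  exact h'

open Classical in
lemma sum_charPolyUnder {n : ℕ} (𝒜 : Finset (AffForm n))
    (μ : Flat 𝒜 → Flat 𝒜 → ℝ) (hμ : IsMoebius 𝒜 μ) (d : ℕ) (t : ℝ) (W : Flat 𝒜) :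
    (∑ X : Flat 𝒜, (if X ≤ W then 1 else 0) * charPolyUnder 𝒜 μ d X t)
      = t ^ (dimS W.1 - d) := by
  have e : ∀ X, charPolyUnder 𝒜 μ d X t = ∑ Y : Flat 𝒜, μ Y X * t ^ (dimS Y.1 - d) := by
    intro X
    refine Finset.sum_congr rfl fun Y _ => ?_
    by_cases a : Y ≤ X
    · simp [a]
    · simp [a, hμ.2.2 Y X a]
  simp only [e, Finset.mul_sum]
  rw [Finset.sum_comm]
  have e2 : ∀ Y : Flat 𝒜, (∑ X : Flat 𝒜, (if X ≤ W then (1 : ℝ) else 0) *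
      (μ Y X * t ^ (dimS Y.1 - d))) = (if Y = W then 1 else 0) * t ^ (dimS Y.1 - d) := by
    intro Y
    rw [← moebius_left 𝒜 μ hμ Y W, Finset.sum_mul]
    exact Finset.sum_congr rfl fun X _ => by ring
  simp only [e2]
  simp

open Classical in
/-- **Intermediate form of Kung's identity.**
`χ(𝒜, st) = Σ_{X ∨ Y = ⊤} χ(𝒜^X, s) χ(𝒜^Y, t)`, the sum over pairs of flats whose
join (smallest flat containing both, i.e. whose only common upper bound) is `⊤`. -/
theorem kung_identity_join {n : ℕ} (𝒜 : Finset (AffForm n))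
    (h𝒜 : ∀ ℓ ∈ 𝒜, ℓ.linear ≠ 0)
    (d : ℕ) (hd : ∀ X : Flat 𝒜, IsMin X → dimS X.1 = d)
    (μ : Flat 𝒜 → Flat 𝒜 → ℝ) (hμ : IsMoebius 𝒜 μ)
    (s t : ℝ) :
    charPolyUnder 𝒜 μ d (topFlat 𝒜) (s * t)
      = ∑ X : Flat 𝒜, ∑ Y : Flat 𝒜,
          if (∀ Z : Flat 𝒜, X ≤ Z → Y ≤ Z → Z = topFlat 𝒜) then
            charPolyUnder 𝒜 μ d X s * charPolyUnder 𝒜 μ d Y t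
          else 0 := by
  have hL : charPolyUnder 𝒜 μ d (topFlat 𝒜) (s * t)
      = ∑ W : Flat 𝒜, ∑ X : Flat 𝒜, ∑ Y : Flat 𝒜,
        ((if joinFlat 𝒜 X Y ≤ W then 1 else 0) * μ W (topFlat 𝒜)) *
          (charPolyUnder 𝒜 μ d X s * charPolyUnder 𝒜 μ d Y t) := by
    refine Finset.sum_congr rfl fun W _ => ?_
    rw [if_pos (le_topFlat 𝒜 W), mul_pow, ← sum_charPolyUnder 𝒜 μ hμ d s W,
      ← sum_charPolyUnder 𝒜 μ hμ d t W, Finset.sum_mul_sum, Finset.mul_sum]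
    refine Finset.sum_congr rfl fun X _ => ?_
    rw [Finset.mul_sum]
    refine Finset.sum_congr rfl fun Y _ => ?_
    by_cases a : X ≤ W <;> by_cases b : Y ≤ W <;> simp [joinFlat_le_iff, a, b]
  rw [hL, Finset.sum_comm]
  refine Finset.sum_congr rfl fun X _ => ?_
  rw [Finset.sum_comm]
  refine Finset.sum_congr rfl fun Y _ => ?_
  rw [← Finset.sum_mul, moebius_right 𝒜 μ hμ]
  have hiff : (∀ Z : Flat 𝒜, X ≤ Z → Y ≤ Z → Z = topFlat 𝒜) ↔
      joinFlat 𝒜 X Y = topFlat 𝒜 := by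
    constructor
    · intro h
      obtain ⟨a, b⟩ := (joinFlat_le_iff 𝒜 X Y _).1 le_rfl
      exact h _ a b
    · intro h Z a b
      have := (joinFlat_le_iff 𝒜 X Y Z).2 ⟨a, b⟩
      rw [h] at this
      exact le_antisymm (le_topFlat 𝒜 Z) this
  by_cases c : joinFlat 𝒜 X Y = topFlat 𝒜
  · rw [if_pos c, if_pos (hiff.2 c), one_mul]
  · rw [if_neg c, if_neg (fun h => c (hiff.1 h)), zero_mul]

end CharElts
end
end
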